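/- arXiv:1304.2328 — 2 statements merged into one kernel-verified Lean document; each statement's English description precedes it below -/
import Mathlib

section
/- For every matrix X ∈ M_n(ℂ), the operator norm satisfies ‖X‖ = inf{ Σ_i |c_i| : X = Σ_i c_i U_i with each U_i ∈ M_n(ℂ) unitary }, where the infimum is taken over all finite decompositions of X as a linear combination of unitary matrices. -/
open scoped Kronecker ComplexOrder
open Matrix

namespace Ent

variable {ι κ : Type*} [Fintype ι] [Fintype κ]

/-- Inner product ⟨v,w⟩ = Σᵢ conj(v i) * (w i) (conjugate-linear in the first argument). -/
noncomputable def vinner (v w : ι → ℂ) : ℂ := dotProduct (star v) w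

/-- An elementary (product) tensor a ⊗ b in ℂ^ι ⊗ ℂ^κ. -/
def prodVec (a : ι → ℂ) (b : κ → ℂ) : ι × κ → ℂ := fun p => a p.1 * b p.2

/-- `v` has Schmidt rank at most `k`. -/
def SchmidtRankLE (k : ℕ) (v : ι × κ → ℂ) : Prop :=
  ∃ (a : Fin k → ι → ℂ) (b : Fin k → κ → ℂ), v = ∑ i, prodVec (a i) (b i)

/-- The rank-one operator |v⟩⟨w|. -/
noncomputable def ketBra (v : ι → ℂ) (w : κ → ℂ) : Matrix ι κ ℂ :=
  Matrix.vecMulVec v (star w)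

/-- A finite family of vectors is orthonormal. -/
def Orthonormal' {N : Type*} [DecidableEq N] (v : N → ι → ℂ) : Prop :=
  ∀ i j, vinner (v i) (v j) = if i = j then 1 else 0

/-- The S(k)-norm of `X ∈ M_ι ⊗ M_κ`. -/
noncomputable def SkNorm (k : ℕ) (X : Matrix (ι × κ) (ι × κ) ℂ) : ℝ :=
  sSup { r | ∃ v w : ι × κ → ℂ, vinner v v = 1 ∧ vinner w w = 1 ∧
    SchmidtRankLE k v ∧ SchmidtRankLE k w ∧
    r = ‖vinner v (X.mulVec w)‖ }

/-- The product numerical radius r_k^⊗. -/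
noncomputable def prodRad (k : ℕ) (Y : Matrix (ι × κ) (ι × κ) ℂ) : ℝ :=
  sSup { r | ∃ v : ι × κ → ℂ, vinner v v = 1 ∧ SchmidtRankLE k v ∧
    r = ‖vinner v (Y.mulVec v)‖ }

/-- The norm ‖·‖_{γ,k}. -/
noncomputable def gammaNorm (k : ℕ) (X : Matrix (ι × κ) (ι × κ) ℂ) : ℝ :=
  sInf { r | ∃ (N : ℕ) (c : Fin N → ℂ) (v w : Fin N → (ι × κ → ℂ)),
    (∀ i, vinner (v i) (v i) = 1 ∧ vinner (w i) (w i) = 1 ∧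
      SchmidtRankLE k (v i) ∧ SchmidtRankLE k (w i)) ∧
    X = ∑ i, c i • ketBra (v i) (w i) ∧
    r = ∑ i, ‖c i‖ }

/-- `ρ` is a density matrix. -/
def IsDensity (ρ : Matrix ι ι ℂ) : Prop := ρ.PosSemidef ∧ ρ.trace = 1

/-- `ρ` has Schmidt number at most `k`: it is a convex combination of projections onto
unit vectors of Schmidt rank at most `k`. -/
def SchmidtNumLE (k : ℕ) (ρ : Matrix (ι × κ) (ι × κ) ℂ) : Prop :=
  ∃ (N : ℕ) (p : Fin N → ℝ) (v : Fin N → (ι × κ → ℂ)),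
    (∀ i, 0 ≤ p i ∧ vinner (v i) (v i) = 1 ∧ SchmidtRankLE k (v i)) ∧
    (∑ i, p i) = 1 ∧ ρ = ∑ i, p i • ketBra (v i) (v i)

/-- The robustness norm R_k on Hermitian operators. -/
noncomputable def Rk (k : ℕ) (Y : Matrix (ι × κ) (ι × κ) ℂ) : ℝ :=
  sInf { r | ∃ (c₁ c₂ : ℝ) (ρ₁ ρ₂ : Matrix (ι × κ) (ι × κ) ℂ),
    0 ≤ c₁ ∧ 0 ≤ c₂ ∧ IsDensity ρ₁ ∧ IsDensity ρ₂ ∧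
    SchmidtNumLE k ρ₁ ∧ SchmidtNumLE k ρ₂ ∧
    Y = c₁ • ρ₁ - c₂ • ρ₂ ∧ r = c₁ + c₂ }

/-- `Y` is k-block positive: ⟨v|Y|v⟩ ≥ 0 for every unit vector of Schmidt rank at most `k`. -/
def KBlockPos (k : ℕ) (Y : Matrix (ι × κ) (ι × κ) ℂ) : Prop :=
  ∀ v : ι × κ → ℂ, vinner v v = 1 → SchmidtRankLE k v →
    0 ≤ (vinner v (Y.mulVec v)).re

/-- Dual of a norm on matrices, w.r.t. the Hilbert–Schmidt inner product ⟨W,X⟩ = Tr(Wᴴ X). -/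
noncomputable def dualNormM (f : Matrix ι κ ℂ → ℝ) (X : Matrix ι κ ℂ) : ℝ :=
  sSup { r | ∃ W : Matrix ι κ ℂ, f W ≤ 1 ∧ r = ‖(Wᴴ * X).trace‖ }

/-- Dual of a norm, computed in the real Hilbert space of Hermitian matrices with the
Hilbert–Schmidt inner product ⟨W,Y⟩ = Tr(WY). -/
noncomputable def dualNormHerm (f : Matrix ι ι ℂ → ℝ) (Y : Matrix ι ι ℂ) : ℝ :=
  sSup { r | ∃ W : Matrix ι ι ℂ, W.IsHermitian ∧ f W ≤ 1 ∧ r = |((W * Y).trace).re| }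

/-- The Frobenius norm of a matrix. -/
noncomputable def frobNorm (X : Matrix ι κ ℂ) : ℝ :=
  Real.sqrt (∑ i, ∑ j, Complex.normSq (X i j))

/-- The (k,2)-norm: ‖X‖_{(k,2)} = sup { |Tr(XY)| : rank Y ≤ k, ‖Y‖_F ≤ 1 }. -/
noncomputable def kNorm (k : ℕ) (X : Matrix ι κ ℂ) : ℝ :=
  sSup { r | ∃ Y : Matrix κ ι ℂ, Y.rank ≤ k ∧ frobNorm Y ≤ 1 ∧
    r = ‖(X * Y).trace‖ }

/-- The trace norm: the sum of the singular values, i.e. of the square roots of the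
eigenvalues of Xᴴ X. -/
noncomputable def traceNorm [DecidableEq κ] (X : Matrix ι κ ℂ) : ℝ :=
  ∑ i, Real.sqrt ((Matrix.isHermitian_conjTranspose_mul_self X).eigenvalues i)

/-- The s(k) vector norm: sup of |⟨u,w⟩| over unit vectors u of Schmidt rank at most k. -/
noncomputable def skVecNorm (k : ℕ) (w : ι × κ → ℂ) : ℝ :=
  sSup { r | ∃ u : ι × κ → ℂ, vinner u u = 1 ∧ SchmidtRankLE k u ∧
    r = ‖vinner u w‖ }

/-- Dual of a norm on vectors. -/
noncomputable def dualNormV (f : (ι × κ → ℂ) → ℝ) (v : ι × κ → ℂ) : ℝ :=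
  sSup { r | ∃ w : ι × κ → ℂ, f w ≤ 1 ∧ r = ‖vinner w v‖ }

/-- The realignment map, L(X)_{(i,k),(j,l)} = X_{(i,j),(k,l)}. -/
def realign {m n : ℕ} (X : Matrix (Fin m × Fin n) (Fin m × Fin n) ℂ) :
    Matrix (Fin m × Fin m) (Fin n × Fin n) ℂ :=
  fun p q => X (p.1, q.1) (p.2, q.2)

/-- The projective tensor norm on M_{m,n} ⊗ M_{m,n}. -/
noncomputable def projNorm {m n : ℕ} (Z : Matrix (Fin m × Fin m) (Fin n × Fin n) ℂ) : ℝ :=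
  sInf { r | ∃ (N : ℕ) (A B : Fin N → Matrix (Fin m) (Fin n) ℂ),
    Z = ∑ i, A i ⊗ₖ B i ∧ r = ∑ i, traceNorm (A i) * traceNorm (B i) }


/-- The operator norm on M_ι,κ. -/
noncomputable def opNorm {ι κ : Type*} [Fintype ι] [Fintype κ] (X : Matrix ι κ ℂ) : ℝ :=
  sSup { r | ∃ v : ι → ℂ, ∃ w : κ → ℂ, vinner v v = 1 ∧ vinner w w = 1 ∧
    r = ‖vinner v (X.mulVec w)‖ }

/-!
Call `∑ |cᵢ|` the cost of a decomposition `a = ∑ cᵢ uᵢ` into unitaries of a unital C⋆-algebra. It is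
at least `‖a‖`, since unitaries have norm at most one. The converse is the Kadison–Pedersen form of
the Russo–Dye theorem. An invertible contraction `b` is the mean of two unitaries: in the polar
decomposition `b = u|b|` the factor `|b|` is the real part of the unitary `|b| + i√(1 - |b|²)`. If
`u` is unitary and `‖a‖ < 1`, then `u + a = u(1 + u⋆a)` is invertible, so `u + a` is a sum of two
unitaries, and inductively `u + m a` is a sum of `m + 1` unitaries. If `‖a‖ < 1 - 2 / (m + 1)`,
applying this with `u = 1` to `((m + 1) a - 1) / m` exhibits `a` as a mean of `m + 1` unitaries.
Thus every `r > ‖a‖` is the cost of a decomposition of `a`.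
-/

section RussoDye

variable {A : Type*} [CStarAlgebra A] {a : A}

lemma exists_unitary_mul_abs_eq [PartialOrder A] [StarOrderedRing A] (ha : IsUnit a) :
    ∃ u : unitary A, (u : A) * CFC.abs a = a := by
  have isUnit_abs : IsUnit (CFC.abs a) := by
    rw [← isUnit_mul_self_iff, CFC.abs_mul_abs]
    exact ha.star.mul ha
  obtain ⟨p, hp⟩ := isUnit_abs
  have star_p_inv : star (↑p⁻¹ : A) = ↑p⁻¹ := by
    have star_p : star p = p := Units.ext (by simp [hp, (CFC.abs_nonneg a).star_eq])
    rw [← Units.coe_star, star_inv, star_p]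
  have star_mul_self : star (a * ↑p⁻¹) * (a * ↑p⁻¹) = 1 := calc
    star (a * ↑p⁻¹) * (a * ↑p⁻¹) = ↑p⁻¹ * (star a * a) * ↑p⁻¹ := by
      simp only [star_mul, star_p_inv, mul_assoc]
    _ = ↑p⁻¹ * (↑p * ↑p) * ↑p⁻¹ := by rw [← CFC.abs_mul_abs, hp]
    _ = 1 := by simp
  exact ⟨⟨a * ↑p⁻¹, (ha.mul p⁻¹.isUnit).mem_unitary_of_star_mul_self star_mul_self⟩, by simp [← hp]⟩

lemma exists_unitary_add_star_eq_two_smul (b : selfAdjoint A) (norm_le : ‖b‖ ≤ 1) :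
    ∃ v : unitary A, (v + star v : A) = (2 : ℝ) • (b : A) := by
  let _ := CStarAlgebra.spectralOrder A
  let _ := CStarAlgebra.spectralOrderedRing A
  refine ⟨selfAdjoint.unitarySelfAddISMul b norm_le, ?_⟩
  rw [Unitary.coe_star, selfAdjoint.star_coe_unitarySelfAddISMul,
    selfAdjoint.unitarySelfAddISMul_coe]
  module

lemma exists_unitary_add_unitary_eq_two_smul (ha : IsUnit a) (norm_le : ‖a‖ ≤ 1) :
    ∃ v w : unitary A, (v + w : A) = (2 : ℝ) • a := by
  let _ := CStarAlgebra.spectralOrder A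
  let _ := CStarAlgebra.spectralOrderedRing A
  obtain ⟨u, polar⟩ := exists_unitary_mul_abs_eq ha
  obtain ⟨v, hv⟩ := exists_unitary_add_star_eq_two_smul
    ⟨CFC.abs a, (CFC.abs_nonneg a).isSelfAdjoint⟩ (CFC.norm_abs.trans_le norm_le)
  refine ⟨u * v, u * star v, ?_⟩
  rw [Submonoid.coe_mul, Submonoid.coe_mul, ← mul_add, hv, mul_smul_comm, polar]

lemma norm_coe_unitary_le_one {E : Type*} [NormedRing E] [StarRing E] [CStarRing E]
    (u : unitary E) : ‖(u : E)‖ ≤ 1 := by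
  cases subsingleton_or_nontrivial E
  · simp [Subsingleton.elim (u : E) 0]
  · exact (CStarRing.norm_coe_unitary u).le

lemma isUnit_coe_unitary_add (u : unitary A) (ha : ‖a‖ < 1) : IsUnit (u + a : A) := by
  have factor : (u + a : A) = u * (1 - -(star (u : A) * a)) := by
    rw [sub_neg_eq_add, mul_add, mul_one, ← mul_assoc, Unitary.mul_star_self_of_mem u.2, one_mul]
  have norm_lt : ‖-(star (u : A) * a)‖ < 1 := by
    rwa [norm_neg, CStarRing.norm_mem_unitary_mul a (Unitary.star_mem u.2)]
  rw [factor]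
  exact Unitary.isUnit_coe.mul (Units.oneSub _ norm_lt).isUnit

lemma exists_unitary_add_unitary_eq_add (u : unitary A) (ha : ‖a‖ < 1) :
    ∃ v w : unitary A, (v + w : A) = u + a := by
  have isUnit_half : IsUnit ((2⁻¹ : ℝ) • (u + a : A)) :=
    (isUnit_coe_unitary_add u ha).smul (Units.mk0 (2⁻¹ : ℝ) (by norm_num))
  have norm_half : ‖(2⁻¹ : ℝ) • (u + a : A)‖ ≤ 1 := by
    rw [norm_smul, Real.norm_of_nonneg (by norm_num)]
    linarith [norm_add_le (u : A) a, norm_coe_unitary_le_one u]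
  simpa using exists_unitary_add_unitary_eq_two_smul isUnit_half norm_half

lemma exists_sum_unitary_eq_add_smul (ha : ‖a‖ < 1) (m : ℕ) (u : unitary A) :
    ∃ U : Fin (m + 1) → unitary A, ∑ i, (U i : A) = u + (m : ℝ) • a := by
  induction m generalizing u with
  | zero => exact ⟨fun _ ↦ u, by simp⟩
  | succ m ih =>
    obtain ⟨v, w, hvw⟩ := exists_unitary_add_unitary_eq_add u ha
    obtain ⟨U, hU⟩ := ih w
    refine ⟨Fin.cons v U, ?_⟩
    calc ∑ i, ((Fin.cons v U : Fin (m + 2) → unitary A) i : A)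
        = v + (w + (m : ℝ) • a) := by
          rw [Fin.sum_univ_succ]
          simp only [Fin.cons_zero, Fin.cons_succ, hU]
      _ = u + a + (m : ℝ) • a := by rw [← add_assoc, hvw]
      _ = u + ((m + 1 : ℕ) : ℝ) • a := by push_cast; module

lemma exists_sum_unitary_eq_smul {n : ℕ} (hn : 2 < n * (1 - ‖a‖)) :
    ∃ U : Fin n → unitary A, ∑ i, (U i : A) = (n : ℝ) • a := by
  have two_lt : (2 : ℝ) < n := by nlinarith [norm_nonneg a, n.cast_nonneg (α := ℝ)]
  obtain ⟨m, rfl⟩ := Nat.exists_eq_succ_of_ne_zero (n := n) (by rintro rfl; norm_num at two_lt)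
  push_cast at hn two_lt
  have m_pos : (0 : ℝ) < m := by linarith
  have norm_lt : ‖(m⁻¹ : ℝ) • ((m + 1 : ℝ) • a - 1)‖ < 1 := by
    rw [norm_smul, norm_inv, Real.norm_of_nonneg m_pos.le, inv_mul_lt_one₀ m_pos]
    calc ‖(m + 1 : ℝ) • a - 1‖ ≤ ‖(m + 1 : ℝ) • a‖ + ‖(1 : A)‖ := norm_sub_le _ _
      _ ≤ (m + 1) * ‖a‖ + 1 := by
        rw [norm_smul, Real.norm_of_nonneg (by positivity)]
        gcongr
        exact norm_coe_unitary_le_one (1 : unitary A)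
      _ < m := by linarith
  obtain ⟨U, hU⟩ := exists_sum_unitary_eq_add_smul norm_lt m 1
  exact ⟨U, by simp [hU, smul_inv_smul₀ m_pos.ne']⟩

lemma exists_sum_smul_unitary_of_norm_lt {r : ℝ} (hr : ‖a‖ < r) :
    ∃ (n : ℕ) (c : Fin n → ℂ) (U : Fin n → unitary A),
      a = ∑ i, c i • (U i : A) ∧ ∑ i, ‖c i‖ = r := by
  have r_pos : 0 < r := (norm_nonneg a).trans_lt hr
  have norm_lt : ‖r⁻¹ • a‖ < 1 := by
    rwa [norm_smul, norm_inv, Real.norm_of_nonneg r_pos.le, inv_mul_lt_one₀ r_pos]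
  obtain ⟨n, hn⟩ := exists_nat_gt (2 / (1 - ‖r⁻¹ • a‖))
  have n_pos : (0 : ℝ) < n := (div_pos two_pos (sub_pos.2 norm_lt)).trans hn
  obtain ⟨U, hU⟩ := exists_sum_unitary_eq_smul ((div_lt_iff₀ (sub_pos.2 norm_lt)).1 hn)
  refine ⟨n, fun _ ↦ ((r / n : ℝ) : ℂ), U, ?_, ?_⟩
  · have scale : r / n * (n * r⁻¹) = 1 := by field_simp
    rw [← Finset.smul_sum, hU, Complex.coe_smul, smul_smul, smul_smul, mul_assoc, scale, one_smul]
  · simp only [Complex.norm_real, Real.norm_of_nonneg (div_pos r_pos n_pos).le, Finset.sum_const,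
      Finset.card_univ, Fintype.card_fin, nsmul_eq_mul, mul_div_cancel₀ r n_pos.ne']

lemma norm_sum_smul_unitary_le {ι 𝕜 E : Type*} [NormedField 𝕜] [NormedRing E] [StarRing E]
    [CStarRing E] [NormedSpace 𝕜 E] (s : Finset ι) (c : ι → 𝕜) (U : ι → unitary E) :
    ‖∑ i ∈ s, c i • (U i : E)‖ ≤ ∑ i ∈ s, ‖c i‖ :=
  norm_sum_le_of_le s fun i _ ↦ by
    rw [norm_smul]
    exact mul_le_of_le_one_right (norm_nonneg _) (norm_coe_unitary_le_one (U i))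

theorem operatorNorm_eq_inf_unitary_decompositions_general (a : A) :
    ‖a‖ = sInf { r | ∃ (N : ℕ) (c : Fin N → ℂ) (U : Fin N → A),
      (∀ i, U i ∈ unitary A) ∧ a = ∑ i, c i • U i ∧ r = ∑ i, ‖c i‖ } := by
  set costs := { r | ∃ (N : ℕ) (c : Fin N → ℂ) (U : Fin N → A),
    (∀ i, U i ∈ unitary A) ∧ a = ∑ i, c i • U i ∧ r = ∑ i, ‖c i‖ }
  have norm_le_cost : ∀ r ∈ costs, ‖a‖ ≤ r := by
    rintro _ ⟨N, c, U, hU, rfl, rfl⟩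
    exact norm_sum_smul_unitary_le Finset.univ c fun i ↦ ⟨U i, hU i⟩
  have mem_costs {r : ℝ} (hr : ‖a‖ < r) : r ∈ costs := by
    obtain ⟨N, c, U, sum_eq, cost_eq⟩ := exists_sum_smul_unitary_of_norm_lt hr
    exact ⟨N, c, fun i ↦ U i, fun i ↦ (U i).2, sum_eq, cost_eq.symm⟩
  refine (csInf_eq_of_forall_ge_of_forall_gt_exists_lt ⟨_, mem_costs (lt_add_one ‖a‖)⟩
    norm_le_cost fun s hs ↦ ?_).symm
  obtain ⟨r, norm_lt, lt_s⟩ := exists_between hs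
  exact ⟨r, mem_costs norm_lt, lt_s⟩

end RussoDye

lemma norm_eq_sSup_norm_inner {𝕜 E F : Type*} [RCLike 𝕜] [NormedAddCommGroup E]
    [InnerProductSpace 𝕜 E] [NormedAddCommGroup F] [InnerProductSpace 𝕜 F] (T : E →L[𝕜] F) :
    ‖T‖ = sSup { r | ∃ (v : F) (w : E), ‖v‖ = 1 ∧ ‖w‖ = 1 ∧ r = ‖inner 𝕜 v (T w)‖ } := by
  set values := { r | ∃ (v : F) (w : E), ‖v‖ = 1 ∧ ‖w‖ = 1 ∧ r = ‖inner 𝕜 v (T w)‖ }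
  have value_le : ∀ r ∈ values, r ≤ ‖T‖ := by
    rintro _ ⟨v, w, hv, hw, rfl⟩
    calc ‖inner 𝕜 v (T w)‖ ≤ ‖v‖ * ‖T w‖ := norm_inner_le_norm v (T w)
      _ ≤ ‖T‖ := by simpa [hv, hw] using T.le_opNorm w
  have sSup_nonneg : 0 ≤ sSup values := Real.sSup_nonneg (by
    rintro _ ⟨v, w, -, -, rfl⟩
    exact norm_nonneg _)
  refine le_antisymm (T.opNorm_le_of_re_inner_le sSup_nonneg fun w v hw hv ↦ ?_)
    (Real.sSup_le value_le (norm_nonneg T))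
  calc RCLike.re (inner 𝕜 (T w) v) ≤ ‖inner 𝕜 (T w) v‖ := RCLike.re_le_norm _
    _ = ‖inner 𝕜 v (T w)‖ := norm_inner_symm _ _
    _ ≤ sSup values := le_csSup ⟨‖T‖, value_le⟩ ⟨v, w, hv, hw, rfl⟩

lemma vinner_eq_inner (v w : ι → ℂ) : vinner v w = inner ℂ (WithLp.toLp 2 v) (WithLp.toLp 2 w) := by
  rw [EuclideanSpace.inner_toLp_toLp, vinner, dotProduct_comm]

lemma vinner_self_eq_one_iff (v : ι → ℂ) : vinner v v = 1 ↔ ‖WithLp.toLp 2 v‖ = 1 := by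
  rw [vinner_eq_inner, inner_self_eq_norm_sq_to_K,
    ← pow_eq_one_iff_of_nonneg (norm_nonneg _) two_ne_zero,
    ← RCLike.ofReal_pow, ← RCLike.ofReal_one, RCLike.ofReal_inj]

open scoped Matrix.Norms.L2Operator

lemma opNorm_eq_l2_opNorm [DecidableEq κ] (X : Matrix ι κ ℂ) : opNorm X = ‖X‖ := by
  rw [l2_opNorm_def, norm_eq_sSup_norm_inner, opNorm]
  simp only [vinner_self_eq_one_iff]
  simp only [vinner_eq_inner, (WithLp.toLp_surjective 2).exists]
  rfl

/-- the operator norm of `X ∈ M_n(ℂ)` is the infimum of `Σᵢ |cᵢ|` over all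
finite decompositions `X = Σᵢ cᵢ Uᵢ` of `X` as a linear combination of unitary matrices. -/
theorem operatorNorm_eq_inf_unitary_decompositions {n : ℕ} (X : Matrix (Fin n) (Fin n) ℂ) :
    opNorm X = sInf { r | ∃ (N : ℕ) (c : Fin N → ℂ) (U : Fin N → Matrix (Fin n) (Fin n) ℂ),
      (∀ i, U i ∈ Matrix.unitaryGroup (Fin n) ℂ) ∧
      X = ∑ i, c i • U i ∧ r = ∑ i, ‖c i‖ } := by
  rw [opNorm_eq_l2_opNorm]
  exact operatorNorm_eq_inf_unitary_decompositions_general X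

end Ent
end

section
/- Fix 1 ≤ k ≤ min(m,n). For every Hermitian Y ∈ M_m ⊗ M_n, the dual norm of r_k^⊗ (computed in the real Hilbert space of Hermitian operators with the Hilbert–Schmidt inner product) equals R_k: that is, r_k^⊗(Y)° = R_k(Y). -/
open scoped Kronecker ComplexOrder
open Matrix

namespace Ent

variable {ι κ : Type*} [Fintype ι] [Fintype κ]

/-!
Let `P` be the set of projections onto unit vectors of Schmidt rank at most `k`, inside the real
space of Hermitian matrices. The states of Schmidt number at most `k` form the convex hull of `P`,
so `R_k` is the gauge of the absolutely convex hull of `P`, while `r_k^⊗ W ≤ 1` says that the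
functional `Tr (W ·)` is bounded by `1` in absolute value on `P`. By Hahn–Banach the gauge at `Y`
is the largest value at `Y` of such a functional, and every functional has the form `Tr (W ·)`.

The gauge is finite because `P` spans: a Hermitian `W` with `⟨a ⊗ b|W|a ⊗ b⟩ = 0` for all `a`, `b`
vanishes, by complex polarization first in `a` and then in `b`.
-/

section Gauge

open scoped Pointwise

variable {E : Type*} [AddCommGroup E] [Module ℝ E] {s : Set E}

lemma exists_dual_eq_seminorm (p : Seminorm ℝ E) (y : E) :
    ∃ g : Module.Dual ℝ E, g y = p y ∧ ∀ x, |g x| ≤ p x := by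
  have smul_eq_zero_of_smul_eq_zero : ∀ c : ℝ, c • y = 0 → c • p y = 0 := fun c hc => by
    have h := map_smul_eq_mul p c y
    rw [hc, map_zero, eq_comm, mul_eq_zero, norm_eq_zero] at h
    rwa [smul_eq_mul, mul_eq_zero]
  let f := LinearPMap.mkSpanSingleton' (σ := RingHom.id ℝ) y (p y) smul_eq_zero_of_smul_eq_zero
  have f_le : ∀ x : f.domain, f.toFun x ≤ p x := by
    rintro ⟨x, hx⟩
    obtain ⟨c, rfl⟩ := Submodule.mem_span_singleton.1 hx
    calc f ⟨c • y, hx⟩ = c * p y := LinearPMap.mkSpanSingleton'_apply _ _ _ _ _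
      _ ≤ ‖c‖ * p y := by gcongr; exact Real.le_norm_self c
      _ = p (c • y) := (map_smul_eq_mul p c y).symm
  obtain ⟨g, g_eq, g_le⟩ :=
    Module.Dual.exists_extension_of_le_seminorm_real f.domain f.toFun f_le
  refine ⟨g, ?_, g_le⟩
  exact (g_eq ⟨y, Submodule.mem_span_singleton_self y⟩).trans
    (LinearPMap.mkSpanSingleton'_apply_self _ _ _ _)

lemma exists_mem_smul_absConvexHull_of_mem_span (hs : s.Nonempty) {y : E}
    (hy : y ∈ Submodule.span ℝ s) : ∃ r : ℝ, 0 ≤ r ∧ y ∈ r • absConvexHull ℝ s := by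
  induction hy using Submodule.span_induction with
  | mem x hx => exact ⟨1, zero_le_one, by rw [one_smul]; exact subset_absConvexHull hx⟩
  | zero =>
    obtain ⟨x, hx⟩ := hs
    exact ⟨0, le_rfl, x, subset_absConvexHull hx, zero_smul ℝ x⟩
  | add x₁ x₂ _ _ ih₁ ih₂ =>
    obtain ⟨r₁, hr₁, hx₁⟩ := ih₁
    obtain ⟨r₂, hr₂, hx₂⟩ := ih₂
    refine ⟨r₁ + r₂, by positivity, ?_⟩
    rw [convex_absConvexHull.add_smul hr₁ hr₂]
    exact Set.add_mem_add hx₁ hx₂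
  | smul c x _ ih =>
    obtain ⟨r, -, z, hz, rfl⟩ := ih
    have hz' : (c * r) • z ∈ (c * r) • absConvexHull ℝ s := Set.smul_mem_smul_set hz
    rw [smul_smul]
    exact ⟨|c * r|, abs_nonneg _, balanced_absConvexHull.smul_mono (by simp) hz'⟩

lemma absorbent_absConvexHull (hs : s.Nonempty) (hspan : Submodule.span ℝ s = ⊤) :
    Absorbent ℝ (absConvexHull ℝ s) := fun y => by
  obtain ⟨r, hr, hy⟩ := exists_mem_smul_absConvexHull_of_mem_span hs (hspan ▸ Submodule.mem_top)
  refine absorbs_iff_norm.2 ⟨r, fun c hc => Set.singleton_subset_iff.2 ?_⟩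
  exact balanced_absConvexHull.smul_mono (by rwa [Real.norm_of_nonneg hr]) hy

lemma nonneg_and_mem_smul_absConvexHull_iff (hs : s.Nonempty) {r : ℝ} {y : E} :
    0 ≤ r ∧ y ∈ r • absConvexHull ℝ s ↔ ∃ c₁ c₂ : ℝ, 0 ≤ c₁ ∧ 0 ≤ c₂ ∧ r = c₁ + c₂ ∧
      ∃ ρ₁ ∈ convexHull ℝ s, ∃ ρ₂ ∈ convexHull ℝ s, y = c₁ • ρ₁ - c₂ • ρ₂ := by
  constructor
  · rw [← convexHull_union_neg_eq_absConvexHull, convexHull_union hs hs.neg, convexHull_neg]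
    rintro ⟨hr, _, hx, rfl⟩
    obtain ⟨ρ₁, hρ₁, ρ₂, hρ₂, a, b, ha, hb, hab, rfl⟩ := mem_convexJoin.1 hx
    refine ⟨r * a, r * b, mul_nonneg hr ha, mul_nonneg hr hb, by rw [← mul_add, hab, mul_one],
      ρ₁, hρ₁, -ρ₂, hρ₂, ?_⟩
    simp only [smul_add, smul_smul, smul_neg, sub_neg_eq_add]
  · rintro ⟨c₁, c₂, hc₁, hc₂, rfl, ρ₁, hρ₁, ρ₂, hρ₂, rfl⟩
    have hconv : convexHull ℝ s ⊆ absConvexHull ℝ s :=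
      convexHull_min subset_absConvexHull convex_absConvexHull
    refine ⟨by positivity, ?_⟩
    rw [convex_absConvexHull.add_smul hc₁ hc₂, sub_eq_add_neg, ← smul_neg]
    exact Set.add_mem_add (Set.smul_mem_smul_set (hconv hρ₁))
      (Set.smul_mem_smul_set (balanced_absConvexHull.neg_mem_iff.2 (hconv hρ₂)))

lemma gauge_eq_sInf_nonneg (hs : Absorbent ℝ s) (y : E) :
    gauge s y = sInf {r : ℝ | 0 ≤ r ∧ y ∈ r • s} := by
  have pos_subset_nonneg : {r : ℝ | 0 < r ∧ y ∈ r • s} ⊆ {r : ℝ | 0 ≤ r ∧ y ∈ r • s} :=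
    fun r hr => ⟨hr.1.le, hr.2⟩
  have pos_nonempty : {r : ℝ | 0 < r ∧ y ∈ r • s}.Nonempty := hs.gauge_set_nonempty
  apply le_antisymm
  · exact le_csInf (pos_nonempty.mono pos_subset_nonneg) fun r hr => gauge_le_of_mem hr.1 hr.2
  · exact csInf_le_csInf ⟨0, fun r hr => hr.1⟩ pos_nonempty pos_subset_nonneg

lemma abs_apply_le_gauge_absConvexHull (hs : Absorbent ℝ (absConvexHull ℝ s))
    {g : Module.Dual ℝ E} (hg : ∀ x ∈ s, |g x| ≤ 1) (y : E) :
    |g y| ≤ gauge (absConvexHull ℝ s) y := by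
  have hull_subset : absConvexHull ℝ s ⊆ g.toSeminorm.closedBall 0 1 :=
    absConvexHull_min (fun x hx => by simpa [Seminorm.mem_closedBall] using hg x hx)
      ⟨Seminorm.balanced_closedBall_zero _ _, Seminorm.convex_closedBall _ _ _⟩
  refine le_csInf hs.gauge_set_nonempty ?_
  rintro r ⟨hr, x, hx, rfl⟩
  have abs_apply_le_one : |g x| ≤ 1 := (Seminorm.mem_closedBall_zero _).1 (hull_subset hx)
  rw [map_smul, smul_eq_mul, abs_mul, abs_of_pos hr]
  exact mul_le_of_le_one_right hr.le abs_apply_le_one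

lemma isGreatest_gauge_absConvexHull (hs : Absorbent ℝ (absConvexHull ℝ s)) (y : E) :
    IsGreatest {r | ∃ g : Module.Dual ℝ E, (∀ x ∈ s, |g x| ≤ 1) ∧ r = |g y|}
      (gauge (absConvexHull ℝ s) y) := by
  constructor
  · obtain ⟨g, g_y, g_le⟩ :=
      exists_dual_eq_seminorm (gaugeSeminorm balanced_absConvexHull convex_absConvexHull hs) y
    refine ⟨g, fun x hx => (g_le x).trans (gauge_le_one_of_mem (subset_absConvexHull hx)), ?_⟩
    rw [g_y, abs_of_nonneg (apply_nonneg _ _), gaugeSeminorm_toFun]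
  · rintro _ ⟨g, hg, rfl⟩
    exact abs_apply_le_gauge_absConvexHull hs hg y

end Gauge

section Vectors

lemma norm_vinner_mulVec_self_le [DecidableEq ι] (W : Matrix ι ι ℂ) {v : ι → ℂ}
    (hv : vinner v v = 1) : ‖vinner v (W *ᵥ v)‖ ≤ ‖toEuclideanCLM (𝕜 := ℂ) W‖ := by
  have norm_v : ‖WithLp.toLp 2 v‖ = 1 := by
    rw [vinner_eq_inner] at hv
    rw [← sq_eq_sq₀ (norm_nonneg _) zero_le_one, ← @inner_self_eq_norm_sq ℂ, hv, one_pow]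
    simp
  calc ‖vinner v (W *ᵥ v)‖
      ≤ ‖WithLp.toLp 2 v‖ * ‖toEuclideanCLM (𝕜 := ℂ) W (WithLp.toLp 2 v)‖ := by
        rw [vinner_eq_inner]
        exact norm_inner_le_norm _ _
    _ ≤ ‖toEuclideanCLM (𝕜 := ℂ) W‖ := by
        simpa [norm_v] using (toEuclideanCLM (𝕜 := ℂ) W).le_opNorm (WithLp.toLp 2 v)

lemma eq_zero_of_vinner_mulVec_self_eq_zero {A : Matrix ι ι ℂ}
    (hA : ∀ v, vinner v (A *ᵥ v) = 0) : A = 0 := by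
  classical
  have inner_eq_zero : ∀ x, inner ℂ (toEuclideanLin A x) x = 0 := fun x => by
    rw [← inner_conj_symm]
    exact (map_eq_zero _).2 ((vinner_eq_inner _ _).symm.trans (hA x.ofLp))
  exact toEuclideanLin.map_eq_zero_iff.1 ((inner_map_self_eq_zero _).1 inner_eq_zero)

lemma vinner_smul_mulVec_smul (W : Matrix ι ι ℂ) (c : ℂ) (v : ι → ℂ) :
    vinner (c • v) (W *ᵥ (c • v)) = c * star c * vinner v (W *ᵥ v) := by
  simp only [vinner, star_smul, mulVec_smul, smul_dotProduct, dotProduct_smul, smul_eq_mul,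
    mul_assoc]

lemma exists_vinner_smul_self_eq_one {v : ι → ℂ} (hv : v ≠ 0) :
    ∃ c : ℂ, c ≠ 0 ∧ vinner (c • v) (c • v) = 1 := by
  have norm_ne_zero : (‖WithLp.toLp 2 v‖ : ℂ) ≠ 0 := by simpa using hv
  refine ⟨(‖WithLp.toLp 2 v‖ : ℂ)⁻¹, inv_ne_zero norm_ne_zero, ?_⟩
  rw [vinner_eq_inner, WithLp.toLp_smul, inner_smul_left, inner_smul_right,
    inner_self_eq_norm_sq_to_K, map_inv₀, Complex.conj_ofReal]
  simp only [Complex.coe_algebraMap]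
  field_simp

lemma trace_mul_ketBra (W : Matrix ι ι ℂ) (v : ι → ℂ) :
    (W * ketBra v v).trace = vinner v (W *ᵥ v) := by
  rw [ketBra, vinner, mul_vecMulVec, trace_vecMulVec, dotProduct_comm]

lemma trace_ketBra (v : ι → ℂ) : (ketBra v v).trace = vinner v v := by
  rw [ketBra, vinner, trace_vecMulVec, dotProduct_comm]

end Vectors

section Hermitian

/-- The real vector space of Hermitian matrices. -/
abbrev Herm (α : Type*) : Type _ := selfAdjoint (Matrix α α ℂ)

instance {α : Type*} [Finite α] : FiniteDimensional ℝ (Herm α) :=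
  inferInstanceAs (FiniteDimensional ℝ (selfAdjoint.submodule ℝ (Matrix α α ℂ)))

/-- The Hilbert–Schmidt inner product `Tr (W X)` on Hermitian matrices. The trace of a product of
two Hermitian matrices is real, so nothing is lost by taking real parts. -/
noncomputable def traceForm : LinearMap.BilinForm ℝ (Herm ι) :=
  LinearMap.mk₂ ℝ (fun W X => ((W : Matrix ι ι ℂ) * (X : Matrix ι ι ℂ)).trace.re)
    (fun _ _ _ => by simp [add_mul]) (fun _ _ _ => by simp)
    (fun _ _ _ => by simp [mul_add]) (fun _ _ _ => by simp)

lemma eq_zero_of_traceForm_self_eq_zero {W : Herm ι} (h : traceForm W W = 0) : W = 0 := by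
  have W_star : (W : Matrix ι ι ℂ)ᴴ = W := W.2
  have trace_nonneg := (posSemidef_conjTranspose_mul_self (W : Matrix ι ι ℂ)).trace_nonneg
  have trace_eq_zero : ((W : Matrix ι ι ℂ)ᴴ * (W : Matrix ι ι ℂ)).trace = 0 :=
    Complex.ext (by rwa [W_star]) (Complex.nonneg_iff.1 trace_nonneg).2.symm
  exact Subtype.ext (trace_conjTranspose_mul_self_eq_zero_iff.1 trace_eq_zero)

lemma traceForm_surjective : Function.Surjective (traceForm (ι := ι)) := by
  have injective : Function.Injective (traceForm (ι := ι)) :=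
    (injective_iff_map_eq_zero _).2 fun W hW =>
      eq_zero_of_traceForm_self_eq_zero (LinearMap.congr_fun hW W)
  exact (LinearMap.injective_iff_surjective_of_finrank_eq_finrank
    Subspace.dual_finrank_eq.symm).1 injective

/-- The projection `|v⟩⟨v|` as an element of the space of Hermitian matrices. -/
noncomputable def hermKetBra (v : ι → ℂ) : Herm ι :=
  ⟨ketBra v v, (posSemidef_vecMulVec_self_star v).1⟩

lemma coe_traceForm_hermKetBra (W : Herm ι) (v : ι → ℂ) :
    (traceForm W (hermKetBra v) : ℂ) = vinner v ((W : Matrix ι ι ℂ) *ᵥ v) := by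
  have him : (vinner v ((W : Matrix ι ι ℂ) *ᵥ v)).im = 0 :=
    IsHermitian.im_star_dotProduct_mulVec_self (𝕜 := ℂ) W.2 v
  have hre : traceForm W (hermKetBra v) = (vinner v ((W : Matrix ι ι ℂ) *ᵥ v)).re :=
    congrArg Complex.re (trace_mul_ketBra _ v)
  exact Complex.ext hre him.symm

end Hermitian

section SchmidtRank

variable {k : ℕ} {α β : Type*}

lemma schmidtRankLE_prodVec (hk : 1 ≤ k) (a : α → ℂ) (b : β → ℂ) :
    SchmidtRankLE k (prodVec a b) := by
  obtain ⟨k, rfl⟩ := Nat.exists_eq_add_of_le' hk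
  refine ⟨Pi.single 0 a, fun _ => b, ?_⟩
  rw [Fin.sum_univ_succ]
  ext p
  simp [prodVec]

lemma SchmidtRankLE.smul {v : α × β → ℂ} (hv : SchmidtRankLE k v) (c : ℂ) :
    SchmidtRankLE k (c • v) := by
  obtain ⟨a, b, rfl⟩ := hv
  refine ⟨fun i => c • a i, b, ?_⟩
  ext p
  simp [prodVec, Finset.mul_sum, mul_assoc]

/-- The partial quadratic form `⟨b|W|b⟩`, a matrix on the first tensor factor. -/
noncomputable def contractRight (b : κ → ℂ) (W : Matrix (ι × κ) (ι × κ) ℂ) : Matrix ι ι ℂ :=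
  of fun i i' => vinner b (W.submatrix (Prod.mk i) (Prod.mk i') *ᵥ b)

lemma vinner_prodVec_mulVec_prodVec (W : Matrix (ι × κ) (ι × κ) ℂ) (a : ι → ℂ) (b : κ → ℂ) :
    vinner (prodVec a b) (W *ᵥ prodVec a b) = vinner a (contractRight b W *ᵥ a) := by
  simp only [vinner, prodVec, contractRight, dotProduct, mulVec, of_apply, submatrix_apply,
    Pi.star_apply, Fintype.sum_prod_type, Finset.mul_sum, Finset.sum_mul, star_mul']
  refine Finset.sum_congr rfl fun i _ => ?_
  rw [Finset.sum_comm]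
  exact Finset.sum_congr rfl fun i' _ => Finset.sum_congr rfl fun j _ =>
    Finset.sum_congr rfl fun j' _ => by ring

lemma eq_zero_of_vinner_prodVec_mulVec_eq_zero {W : Matrix (ι × κ) (ι × κ) ℂ}
    (hW : ∀ (a : ι → ℂ) (b : κ → ℂ), vinner (prodVec a b) (W *ᵥ prodVec a b) = 0) : W = 0 := by
  have contract_eq_zero : ∀ b, contractRight b W = 0 := fun b =>
    eq_zero_of_vinner_mulVec_self_eq_zero fun a =>
      (vinner_prodVec_mulVec_prodVec W a b).symm.trans (hW a b)
  have block_eq_zero : ∀ i i', W.submatrix (Prod.mk i) (Prod.mk i') = 0 := fun i i' =>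
    eq_zero_of_vinner_mulVec_self_eq_zero fun b => congrFun₂ (contract_eq_zero b) i i'
  ext p q
  exact congrFun₂ (block_eq_zero p.1 q.1) p.2 q.2

/-- The projections onto unit vectors of Schmidt rank at most `k`, the extreme points of the states
of Schmidt number at most `k`. -/
def schmidtProjections (ι κ : Type*) [Fintype ι] [Fintype κ] (k : ℕ) : Set (Herm (ι × κ)) :=
  hermKetBra '' {v | vinner v v = 1 ∧ SchmidtRankLE k v}

lemma eq_zero_of_traceForm_schmidtProjections_eq_zero (hk : 1 ≤ k) {W : Herm (ι × κ)}
    (hW : ∀ X ∈ schmidtProjections ι κ k, traceForm W X = 0) : W = 0 := by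
  refine Subtype.ext (eq_zero_of_vinner_prodVec_mulVec_eq_zero fun a b => ?_)
  obtain hv | hv := eq_or_ne (prodVec a b) 0
  · rw [hv, mulVec_zero, vinner, dotProduct_zero]
  obtain ⟨c, hc, hunit⟩ := exists_vinner_smul_self_eq_one hv
  have hzero := hW _ ⟨_, ⟨hunit, (schmidtRankLE_prodVec hk a b).smul c⟩, rfl⟩
  rw [← Complex.ofReal_eq_zero, coe_traceForm_hermKetBra, vinner_smul_mulVec_smul] at hzero
  exact (mul_eq_zero.1 hzero).resolve_left (mul_ne_zero hc (star_ne_zero.2 hc))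

lemma span_schmidtProjections (hk : 1 ≤ k) :
    Submodule.span ℝ (schmidtProjections ι κ k) = ⊤ := by
  by_contra hspan
  obtain ⟨g, hg, hker⟩ := Submodule.exists_le_ker_of_lt_top _ (lt_top_iff_ne_top.2 hspan)
  obtain ⟨W, rfl⟩ := traceForm_surjective g
  refine hg ?_
  rw [eq_zero_of_traceForm_schmidtProjections_eq_zero hk fun X hX =>
    hker (Submodule.subset_span hX), map_zero]

lemma schmidtProjections_nonempty [Nonempty ι] [Nonempty κ] (hk : 1 ≤ k) :
    (schmidtProjections ι κ k).Nonempty := by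
  have hv : prodVec (1 : ι → ℂ) (1 : κ → ℂ) ≠ 0 := fun h =>
    one_ne_zero ((mul_one (1 : ℂ)).symm.trans (congrFun h (Classical.arbitrary _)))
  obtain ⟨c, -, hunit⟩ := exists_vinner_smul_self_eq_one hv
  exact ⟨_, _, ⟨hunit, (schmidtRankLE_prodVec hk 1 1).smul c⟩, rfl⟩

lemma bddAbove_prodRad (W : Matrix (ι × κ) (ι × κ) ℂ) :
    BddAbove {r | ∃ v : ι × κ → ℂ, vinner v v = 1 ∧ SchmidtRankLE k v ∧
      r = ‖vinner v (W *ᵥ v)‖} := by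
  classical
  refine ⟨‖toEuclideanCLM (𝕜 := ℂ) W‖, ?_⟩
  rintro _ ⟨v, hunit, -, rfl⟩
  exact norm_vinner_mulVec_self_le W hunit

lemma prodRad_le_one_iff {W : Herm (ι × κ)} :
    prodRad k (W : Matrix (ι × κ) (ι × κ) ℂ) ≤ 1 ↔
      ∀ X ∈ schmidtProjections ι κ k, |traceForm W X| ≤ 1 := by
  have abs_traceForm : ∀ v, |traceForm W (hermKetBra v)| =
      ‖vinner v ((W : Matrix (ι × κ) (ι × κ) ℂ) *ᵥ v)‖ := fun v => by
    rw [← coe_traceForm_hermKetBra, Complex.norm_real, Real.norm_eq_abs]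
  constructor
  · rintro hW _ ⟨v, ⟨hunit, hrank⟩, rfl⟩
    exact (le_csSup (bddAbove_prodRad _) ⟨v, hunit, hrank, abs_traceForm v⟩).trans hW
  · refine fun hW => Real.sSup_le ?_ zero_le_one
    rintro _ ⟨v, hunit, hrank, rfl⟩
    rw [← abs_traceForm]
    exact hW _ ⟨v, ⟨hunit, hrank⟩, rfl⟩

lemma schmidtNumLE_iff_mem_convexHull {ρ : Matrix (ι × κ) (ι × κ) ℂ} :
    SchmidtNumLE k ρ ↔ ∃ X ∈ convexHull ℝ (schmidtProjections ι κ k), (X : Matrix _ _ ℂ) = ρ := by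
  constructor
  · rintro ⟨N, p, v, hpv, hp, rfl⟩
    refine ⟨∑ i, p i • hermKetBra (v i), ?_, by simp [hermKetBra]⟩
    exact mem_convexHull_of_exists_fintype p _ (fun i => (hpv i).1) hp
      (fun i => ⟨v i, (hpv i).2, rfl⟩) rfl
  · rintro ⟨X, hX, rfl⟩
    obtain ⟨α, _, p, z, hp0, hp1, hz, rfl⟩ := mem_convexHull_iff_exists_fintype.1 hX
    choose v hv hvz using hz
    let e := (Fintype.equivFin α).symm
    refine ⟨_, p ∘ e, v ∘ e, fun i => ⟨hp0 _, hv _⟩, (e.sum_comp p).trans hp1, ?_⟩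
    simp only [Function.comp_apply]
    rw [e.sum_comp fun i => p i • ketBra (v i) (v i)]
    simp [← hvz, hermKetBra]

lemma SchmidtNumLE.isDensity {ρ : Matrix (ι × κ) (ι × κ) ℂ} (hρ : SchmidtNumLE k ρ) :
    IsDensity ρ := by
  obtain ⟨N, p, v, hpv, hp, rfl⟩ := hρ
  constructor
  · exact posSemidef_sum _ fun i _ => (posSemidef_vecMulVec_self_star (v i)).smul (hpv i).1
  · simp only [trace_sum, trace_smul, trace_ketBra, (hpv _).2.1]
    rw [← Finset.sum_smul, hp, one_smul]

lemma absorbent_absConvexHull_schmidtProjections [Nonempty ι] [Nonempty κ] (hk : 1 ≤ k) :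
    Absorbent ℝ (absConvexHull ℝ (schmidtProjections ι κ k)) :=
  absorbent_absConvexHull (schmidtProjections_nonempty hk)
    (span_schmidtProjections hk)

lemma Rk_eq_gauge [Nonempty ι] [Nonempty κ] (hk : 1 ≤ k) (Y : Herm (ι × κ)) :
    Rk k (Y : Matrix (ι × κ) (ι × κ) ℂ) =
      gauge (absConvexHull ℝ (schmidtProjections ι κ k)) Y := by
  rw [gauge_eq_sInf_nonneg (E := Herm (ι × κ)) (absorbent_absConvexHull_schmidtProjections hk), Rk]
  congr 1
  ext r
  refine Iff.trans ?_ (nonneg_and_mem_smul_absConvexHull_iff (schmidtProjections_nonempty hk)).symm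
  constructor
  · rintro ⟨c₁, c₂, _, _, hc₁, hc₂, -, -, hρ₁, hρ₂, hY, hr⟩
    obtain ⟨X₁, hX₁, rfl⟩ := schmidtNumLE_iff_mem_convexHull.1 hρ₁
    obtain ⟨X₂, hX₂, rfl⟩ := schmidtNumLE_iff_mem_convexHull.1 hρ₂
    exact ⟨c₁, c₂, hc₁, hc₂, hr, X₁, hX₁, X₂, hX₂, Subtype.ext hY⟩
  · rintro ⟨c₁, c₂, hc₁, hc₂, hr, X₁, hX₁, X₂, hX₂, hY⟩
    have hρ₁ := schmidtNumLE_iff_mem_convexHull.2 ⟨X₁, hX₁, rfl⟩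
    have hρ₂ := schmidtNumLE_iff_mem_convexHull.2 ⟨X₂, hX₂, rfl⟩
    exact ⟨c₁, c₂, X₁, X₂, hc₁, hc₂, hρ₁.isDensity, hρ₂.isDensity, hρ₁, hρ₂,
      congrArg Subtype.val hY, hr⟩

lemma dualNormHerm_prodRad_eq_sSup (Y : Herm (ι × κ)) :
    dualNormHerm (prodRad k) (Y : Matrix (ι × κ) (ι × κ) ℂ) =
      sSup {r | ∃ g : Module.Dual ℝ (Herm (ι × κ)),
        (∀ X ∈ schmidtProjections ι κ k, |g X| ≤ 1) ∧ r = |g Y|} := by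
  rw [dualNormHerm]
  congr 1
  ext r
  constructor
  · rintro ⟨W, hW, hrad, hr⟩
    exact ⟨traceForm ⟨W, hW⟩, prodRad_le_one_iff.1 hrad, hr⟩
  · rintro ⟨g, hg, hr⟩
    obtain ⟨W, rfl⟩ := traceForm_surjective g
    exact ⟨W, W.2, prodRad_le_one_iff.2 hg, hr⟩

end SchmidtRank

theorem dual_prodRad_eq_Rk_general {k : ℕ} [Nonempty ι] [Nonempty κ] (hk : 1 ≤ k)
    {Y : Matrix (ι × κ) (ι × κ) ℂ} (hY : Y.IsHermitian) :
    dualNormHerm (prodRad k) Y = Rk k Y := by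
  lift Y to Herm (ι × κ) using hY
  rw [dualNormHerm_prodRad_eq_sSup, Rk_eq_gauge hk]
  exact (isGreatest_gauge_absConvexHull (E := Herm (ι × κ))
    (absorbent_absConvexHull_schmidtProjections hk) Y).csSup_eq

/-- for Hermitian `Y`, the dual of the product numerical radius `r_k^⊗`, computed
in the real Hilbert space of Hermitian operators with the Hilbert–Schmidt inner product,
equals the robustness norm `R_k`. -/
theorem dual_prodRad_eq_Rk {m n k : ℕ} (hk1 : 1 ≤ k) (hk : k ≤ min m n)
    (Y : Matrix (Fin m × Fin n) (Fin m × Fin n) ℂ) (hY : Y.IsHermitian) :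
    dualNormHerm (prodRad k) Y = Rk k Y := by
  have : Nonempty (Fin m) := Fin.pos_iff_nonempty.1 (by lia)
  have : Nonempty (Fin n) := Fin.pos_iff_nonempty.1 (by lia)
  exact dual_prodRad_eq_Rk_general hk1 hY

end Ent
end
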